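/- arXiv:2410.08135 — 3 statements merged into one kernel-verified Lean document; each statement's English description precedes it below -/
import Mathlib

section
/- Let p_1, …, p_K be distinct complex numbers, m_1, …, m_K positive integers, A an n×n complex matrix, B an n×m complex matrix, and let Φx(l,j) be n×n complex matrices and Φu(l,j) be m×n complex matrices for 1 ≤ l ≤ K, 1 ≤ j ≤ m_l. Define Φx(s) = Σ_{l=1}^K Σ_{j=1}^{m_l} Φx(l,j)/(s−p_l)^j and Φu(s) = Σ_{l=1}^K Σ_{j=1}^{m_l} Φu(l,j)/(s−p_l)^j. Then (sI−A)·Φx(s) − B·Φu(s) = I holds for every s ∈ ℂ with s ∉ {p_1,…,p_K} if and only if the following coefficient equations hold: Σ_{l=1}^K Φx(l,1) = I; Φx(l,j+1) + (p_l·I−A)·Φx(l,j) − B·Φu(l,j) = 0 for every l ∈ {1,…,K} and j ∈ {1,…,m_l−1}; and (p_l·I−A)·Φx(l,m_l) − B·Φu(l,m_l) = 0 for every l ∈ {1,…,K}. -/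
open scoped BigOperators

/-!
Multiplying a principal part `∑ⱼ xⱼ / (s - p)ʲ` by `s = (s - p) + p` shifts its coefficients down by
one and adds `p • xⱼ`; the coefficient shifted out is the constant `x₁`. Hence, for an operator `A`,
`s • X(s) - A X(s) - V(s)` is again a constant plus a sum of principal parts, and its coefficients
are the left-hand sides of the coefficient equations. These vanish exactly when the function is
constant, by uniqueness of partial fractions: a polynomial vanishing on an infinite set is zero, so
the functions on an infinite pole-free set form a faithful algebra over the polynomials, in which
each `X - p` is invertible.
-/

open Polynomial

theorem aeval_subtypeVal_injective {R : Type*} [CommRing R] [IsDomain R] {S : Set R}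
    (hS : S.Infinite) : Function.Injective (aeval (R := R) (Subtype.val : S → R)) := by
  refine (injective_iff_map_eq_zero _).2 fun f hf => f.eq_zero_of_infinite_isRoot ?_
  refine hS.mono fun s hs => ?_
  simpa [aeval_fn_apply] using congrFun hf ⟨s, hs⟩

section PrincipalPartSum

variable {ι k E F : Type*} [Fintype ι] [Field k] [AddCommGroup E] [Module k E]
  [AddCommGroup F] [Module k F]

/-- The sum `∑ₗ ∑ⱼ c l j / (s - p l) ^ j` over `1 ≤ j ≤ mult l` of the principal parts of a rational
function with values in `E`, for poles `p l` of order at most `mult l`. Values `c l j` with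
`j = 0` or `mult l < j` are ignored. -/
def principalPartSum (p : ι → k) (mult : ι → ℕ) (c : ι → ℕ → E) (s : k) : E :=
  ∑ l, ∑ j ∈ Finset.Icc 1 (mult l), ((s - p l) ^ j)⁻¹ • c l j

theorem principalPartSum_eq_sum_fin (p : ι → k) (mult : ι → ℕ) (c : ι → ℕ → E) (s : k) :
    principalPartSum p mult c s =
      ∑ l, ∑ i : Fin (mult l), ((s - p l)⁻¹ ^ (i.1 + 1)) • c l (i + 1) := by
  refine Finset.sum_congr rfl fun l _ => ?_
  rw [Fin.sum_univ_eq_sum_range fun i => ((s - p l)⁻¹ ^ (i + 1)) • c l (i + 1),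
    ← Finset.Ico_add_one_right_eq_Icc, Finset.sum_Ico_eq_sum_range]
  simp only [Nat.add_sub_cancel, add_comm 1, inv_pow]

theorem map_principalPartSum (f : E →ₗ[k] F) (p : ι → k) (mult : ι → ℕ) (c : ι → ℕ → E) (s : k) :
    f (principalPartSum p mult c s) = principalPartSum p mult (fun l j => f (c l j)) s := by
  simp only [principalPartSum, map_sum, map_smul]

theorem principalPartSum_sub (p : ι → k) (mult : ι → ℕ) (c d : ι → ℕ → E) (s : k) :
    principalPartSum p mult (fun l j => c l j - d l j) s =
      principalPartSum p mult c s - principalPartSum p mult d s := by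
  simp only [principalPartSum, smul_sub, Finset.sum_sub_distrib]

theorem principalPartSum_eq_zero {p : ι → k} {mult : ι → ℕ} {c : ι → ℕ → E}
    (hc : ∀ l, ∀ j ∈ Finset.Icc 1 (mult l), c l j = 0) (s : k) :
    principalPartSum p mult c s = 0 :=
  Finset.sum_eq_zero fun l _ => Finset.sum_eq_zero fun j hj => by rw [hc l j hj, smul_zero]

theorem eq_zero_of_add_principalPartSum_eq_zero_of_scalar {p : ι → k} (hp : Function.Injective p)
    {mult : ι → ℕ} {S : Set k} (hS : S.Infinite) (hSp : Disjoint S (Set.range p))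
    {c₀ : k} {c : ι → ℕ → k} (h : ∀ s ∈ S, c₀ + principalPartSum p mult c s = 0) :
    c₀ = 0 ∧ ∀ l, ∀ j ∈ Finset.Icc 1 (mult l), c l j = 0 := by
  let _ : Algebra k[X] (S → k) := (aeval (R := k) (Subtype.val : S → k)).toRingHom.toAlgebra
  have algebraMap_apply (f : k[X]) (s : S) : algebraMap k[X] (S → k) f s = f.eval (s : k) := by
    change aeval (Subtype.val : S → k) f s = _
    rw [aeval_fn_apply, coe_aeval_eq_eval]
  have : FaithfulSMul k[X] (S → k) :=
    (faithfulSMul_iff_algebraMap_injective _ _).2 (aeval_subtypeVal_injective hS)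
  have inv_mul_X_sub_C (l : ι) :
      (fun s : S => ((s : k) - p l)⁻¹) * algebraMap k[X] (S → k) (X - C (p l)) = 1 := by
    ext s
    have hs : (s : k) - p l ≠ 0 :=
      sub_ne_zero.2 fun e => hSp.notMem_of_mem_left s.2 ⟨l, e.symm⟩
    simp [algebraMap_apply, hs]
  have expansion_eq : algebraMap k[X] (S → k) (C c₀) +
        ∑ l, ∑ j : Fin (mult l), algebraMap k[X] (S → k) (C (c l (j + 1))) *
          (fun s : S => ((s : k) - p l)⁻¹) ^ (j.1 + 1) =
      algebraMap k[X] (S → k) 0 +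
        ∑ l, ∑ j : Fin (mult l), algebraMap k[X] (S → k) 0 *
          (fun s : S => ((s : k) - p l)⁻¹) ^ (j.1 + 1) := by
    ext s
    simpa [algebraMap_apply, principalPartSum_eq_sum_fin, mul_comm] using h s s.2
  obtain ⟨hc₀, hc⟩ := quo_add_sum_rem_mul_pow_inverse_unique
    (fun l _ => monic_X_sub_C (p l)) ((pairwise_coprime_X_sub_C hp).set_pairwise _)
    (fun l _ => inv_mul_X_sub_C l)
    (fun l _ _ => by rw [degree_X_sub_C]; exact degree_C_lt) (fun _ _ _ => by simp) expansion_eq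
  refine ⟨C_eq_zero.1 hc₀, fun l j hj => ?_⟩
  obtain ⟨i, rfl⟩ := Nat.exists_eq_add_of_le' (Finset.mem_Icc.1 hj).1
  exact C_eq_zero.1 (congrFun (hc l (Finset.mem_univ l)) ⟨i, (Finset.mem_Icc.1 hj).2⟩)

theorem add_principalPartSum_eq_zero_iff {p : ι → k} (hp : Function.Injective p)
    {mult : ι → ℕ} {S : Set k} (hS : S.Infinite) (hSp : Disjoint S (Set.range p))
    {c₀ : E} {c : ι → ℕ → E} :
    (∀ s ∈ S, c₀ + principalPartSum p mult c s = 0) ↔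
      c₀ = 0 ∧ ∀ l, ∀ j ∈ Finset.Icc 1 (mult l), c l j = 0 := by
  refine ⟨fun h => ?_, fun ⟨hc₀, hc⟩ s _ => by rw [hc₀, principalPartSum_eq_zero hc, add_zero]⟩
  have dual_eq_zero (φ : Module.Dual k E) :
      φ c₀ = 0 ∧ ∀ l, ∀ j ∈ Finset.Icc 1 (mult l), φ (c l j) = 0 :=
    eq_zero_of_add_principalPartSum_eq_zero_of_scalar hp hS hSp fun s hs => by
      rw [← map_principalPartSum, ← map_add, h s hs, map_zero]
  exact ⟨(Module.forall_dual_apply_eq_zero_iff k _).1 fun φ => (dual_eq_zero φ).1,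
    fun l j hj => (Module.forall_dual_apply_eq_zero_iff k _).1 fun φ => (dual_eq_zero φ).2 l j hj⟩

end PrincipalPartSum

section CoefficientEquations

variable {ι k E : Type*} [Field k] [AddCommGroup E] [Module k E]

theorem smul_sum_Icc_inv_pow_smul {t : k} (ht : t ≠ 0) {M : ℕ} (hM : 1 ≤ M) (x : ℕ → E) :
    t • ∑ j ∈ Finset.Icc 1 M, (t ^ j)⁻¹ • x j =
      x 1 + ∑ j ∈ Finset.Ico 1 M, (t ^ j)⁻¹ • x (j + 1) := by
  have smul_term (j : ℕ) : t • (t ^ (j + 1))⁻¹ • x (j + 1) = (t ^ j)⁻¹ • x (j + 1) := by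
    rw [smul_smul, pow_succ, mul_inv_rev, mul_inv_cancel_left₀ ht]
  rw [← Finset.Ico_add_one_right_eq_Icc, Finset.sum_eq_sum_Ico_succ_bot (by omega),
    ← Finset.sum_Ico_add' (fun j => (t ^ j)⁻¹ • x j) 1 M 1, smul_add, Finset.smul_sum]
  simp only [smul_term, zero_add, pow_zero, inv_one, one_smul]

/-- The coefficient of `1 / (s - p l) ^ j` in the partial fraction expansion of
`s • X(s) - A X(s) - V(s)`, where `X` and `V` have the coefficients `x` and `v`; the shifted
coefficient `x l (j + 1)` is present only below the top order `mult l`. -/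
def residualCoeff (A : Module.End k E) (p : ι → k) (mult : ι → ℕ) (x v : ι → ℕ → E)
    (l : ι) (j : ℕ) : E :=
  (if j < mult l then x l (j + 1) else 0) + p l • x l j - A (x l j) - v l j

theorem residualCoeff_eq_zero_iff (A : Module.End k E) (p : ι → k) {mult : ι → ℕ}
    (hmult : ∀ l, 1 ≤ mult l) (x v : ι → ℕ → E) :
    (∀ l, ∀ j ∈ Finset.Icc 1 (mult l), residualCoeff A p mult x v l j = 0) ↔
      (∀ l, ∀ j ∈ Finset.Icc 1 (mult l - 1),
        x l (j + 1) + (p l • x l j - A (x l j)) - v l j = 0) ∧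
      ∀ l, p l • x l (mult l) - A (x l (mult l)) - v l (mult l) = 0 := by
  rw [← forall_and]
  refine forall_congr' fun l => ?_
  have Icc_eq_insert : Finset.Icc 1 (mult l) = insert (mult l) (Finset.Icc 1 (mult l - 1)) :=
    (Finset.insert_Icc_sub_one_right_eq_Icc (hmult l)).symm
  have lt_mult {j : ℕ} (hj : j ∈ Finset.Icc 1 (mult l - 1)) : j < mult l :=
    Nat.lt_of_le_sub_one (hmult l) (Finset.mem_Icc.1 hj).2
  rw [Icc_eq_insert, Finset.forall_mem_insert, and_comm]
  refine and_congr (forall₂_congr fun j hj => ?_) ?_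
  · rw [residualCoeff, if_pos (lt_mult hj), add_sub_assoc (x l (j + 1))]
  · rw [residualCoeff, if_neg (lt_irrefl _), zero_add]

variable [Fintype ι]

theorem smul_principalPartSum (p : ι → k) {mult : ι → ℕ} (hmult : ∀ l, 1 ≤ mult l)
    (x : ι → ℕ → E) {s : k} (hs : s ∉ Set.range p) :
    s • principalPartSum p mult x s = ∑ l, x l 1 + principalPartSum p mult
      (fun l j => (if j < mult l then x l (j + 1) else 0) + p l • x l j) s := by
  simp only [principalPartSum, Finset.smul_sum (s := Finset.univ), ← Finset.sum_add_distrib]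
  refine Finset.sum_congr rfl fun l _ => ?_
  have hne : s - p l ≠ 0 := sub_ne_zero.2 fun e => hs ⟨l, e.symm⟩
  have sum_Ico_eq : ∑ j ∈ Finset.Ico 1 (mult l), ((s - p l) ^ j)⁻¹ • x l (j + 1) =
      ∑ j ∈ Finset.Icc 1 (mult l),
        ((s - p l) ^ j)⁻¹ • if j < mult l then x l (j + 1) else 0 := by
    simp only [smul_ite, smul_zero, ← Finset.sum_filter]
    congr 1
    grind
  calc s • ∑ j ∈ Finset.Icc 1 (mult l), ((s - p l) ^ j)⁻¹ • x l j
      = (s - p l) • ∑ j ∈ Finset.Icc 1 (mult l), ((s - p l) ^ j)⁻¹ • x l j +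
          p l • ∑ j ∈ Finset.Icc 1 (mult l), ((s - p l) ^ j)⁻¹ • x l j := by
        rw [← add_smul, sub_add_cancel]
    _ = x l 1 + (∑ j ∈ Finset.Icc 1 (mult l),
            ((s - p l) ^ j)⁻¹ • (if j < mult l then x l (j + 1) else 0) +
          p l • ∑ j ∈ Finset.Icc 1 (mult l), ((s - p l) ^ j)⁻¹ • x l j) := by
        rw [smul_sum_Icc_inv_pow_smul hne (hmult l), sum_Ico_eq, add_assoc]
    _ = x l 1 + ∑ j ∈ Finset.Icc 1 (mult l),
          ((s - p l) ^ j)⁻¹ • ((if j < mult l then x l (j + 1) else 0) + p l • x l j) := by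
        simp only [Finset.smul_sum, ← Finset.sum_add_distrib, smul_add, smul_comm (p l)]

theorem smul_sub_map_sub_principalPartSum (A : Module.End k E) (p : ι → k) {mult : ι → ℕ}
    (hmult : ∀ l, 1 ≤ mult l) (x v : ι → ℕ → E) {s : k} (hs : s ∉ Set.range p) :
    s • principalPartSum p mult x s - A (principalPartSum p mult x s) -
        principalPartSum p mult v s =
      ∑ l, x l 1 + principalPartSum p mult (residualCoeff A p mult x v) s := by
  rw [smul_principalPartSum p hmult x hs, map_principalPartSum, add_sub_assoc, add_sub_assoc,
    ← principalPartSum_sub, ← principalPartSum_sub]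
  rfl

theorem smul_sub_map_sub_principalPartSum_eq_iff (A : Module.End k E) {p : ι → k}
    (hp : Function.Injective p) {mult : ι → ℕ} (hmult : ∀ l, 1 ≤ mult l) {S : Set k}
    (hS : S.Infinite) (hSp : Disjoint S (Set.range p)) (x v : ι → ℕ → E) (d : E) :
    (∀ s ∈ S, s • principalPartSum p mult x s - A (principalPartSum p mult x s) -
        principalPartSum p mult v s = d) ↔
      ∑ l, x l 1 = d ∧
      (∀ l, ∀ j ∈ Finset.Icc 1 (mult l - 1),
        x l (j + 1) + (p l • x l j - A (x l j)) - v l j = 0) ∧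
      ∀ l, p l • x l (mult l) - A (x l (mult l)) - v l (mult l) = 0 := by
  rw [← residualCoeff_eq_zero_iff A p hmult, ← sub_eq_zero (b := d),
    ← add_principalPartSum_eq_zero_iff hp hS hSp]
  refine forall₂_congr fun s hs => ?_
  rw [smul_sub_map_sub_principalPartSum A p hmult x v (hSp.notMem_of_mem_left hs),
    ← sub_eq_zero, add_sub_right_comm]

end CoefficientEquations

theorem sls_coefficient_constraints_general_general {ι k n m q : Type*} [Fintype ι] [Field k]
    [Fintype n] [DecidableEq n] [Fintype m]
    (p : ι → k) (hp : Function.Injective p) (mult : ι → ℕ) (hmult : ∀ l, 1 ≤ mult l)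
    (S : Set k) (hS : S.Infinite) (hSp : Disjoint S (Set.range p))
    (A : Matrix n n k) (B : Matrix n m k)
    (Φx : ι → ℕ → Matrix n q k) (Φu : ι → ℕ → Matrix m q k) (D : Matrix n q k) :
    (∀ s ∈ S,
        (s • (1 : Matrix n n k) - A) *
            (∑ l, ∑ j ∈ Finset.Icc 1 (mult l), ((s - p l) ^ j)⁻¹ • Φx l j) -
          B * (∑ l, ∑ j ∈ Finset.Icc 1 (mult l), ((s - p l) ^ j)⁻¹ • Φu l j) = D) ↔
      ((∑ l, Φx l 1) = D ∧
        (∀ l, ∀ j ∈ Finset.Icc 1 (mult l - 1),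
          Φx l (j + 1) + (p l • (1 : Matrix n n k) - A) * Φx l j - B * Φu l j = 0) ∧
        (∀ l, (p l • (1 : Matrix n n k) - A) * Φx l (mult l) - B * Φu l (mult l) = 0)) := by
  have pencil_mul (s : k) (X : Matrix n q k) :
      (s • (1 : Matrix n n k) - A) * X = s • X - mulLeftLinearMap q k A X := by
    rw [Matrix.sub_mul, Matrix.smul_mul, Matrix.one_mul, mulLeftLinearMap_apply]
  have mul_principalPartSum (s : k) : B * principalPartSum p mult Φu s =
      principalPartSum p mult (fun l j => B * Φu l j) s :=
    map_principalPartSum (mulLeftLinearMap q k B) p mult Φu s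
  have coefficient_iff := smul_sub_map_sub_principalPartSum_eq_iff (mulLeftLinearMap q k A) hp hmult
    hS hSp Φx (fun l j => B * Φu l j) D
  simp only [← mul_principalPartSum, ← pencil_mul] at coefficient_iff
  exact coefficient_iff

/-- SLS feasibility constraint in partial-fraction coefficient form (general multiplicities). -/
theorem sls_coefficient_constraints_general {n m K : ℕ}
    (p : Fin K → ℂ) (hp : Function.Injective p)
    (mult : Fin K → ℕ) (hmult : ∀ l, 1 ≤ mult l)
    (A : Matrix (Fin n) (Fin n) ℂ) (B : Matrix (Fin n) (Fin m) ℂ)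
    (Φx : Fin K → ℕ → Matrix (Fin n) (Fin n) ℂ)
    (Φu : Fin K → ℕ → Matrix (Fin m) (Fin n) ℂ) :
    (∀ s : ℂ, s ∉ Set.range p →
        (s • (1 : Matrix (Fin n) (Fin n) ℂ) - A) *
            (∑ l, ∑ j ∈ Finset.Icc 1 (mult l), ((s - p l) ^ j)⁻¹ • Φx l j) -
          B * (∑ l, ∑ j ∈ Finset.Icc 1 (mult l), ((s - p l) ^ j)⁻¹ • Φu l j) = 1) ↔
      ((∑ l, Φx l 1) = 1 ∧
        (∀ l, ∀ j ∈ Finset.Icc 1 (mult l - 1),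
          Φx l (j + 1) + (p l • (1 : Matrix (Fin n) (Fin n) ℂ) - A) * Φx l j
            - B * Φu l j = 0) ∧
        (∀ l, (p l • (1 : Matrix (Fin n) (Fin n) ℂ) - A) * Φx l (mult l)
            - B * Φu l (mult l) = 0)) := by
  exact sls_coefficient_constraints_general_general p hp mult hmult (Set.range p)ᶜ
    (Set.finite_range p).infinite_compl disjoint_compl_left A B Φx Φu 1
end

section
/- Let p_1, …, p_K be distinct complex numbers, A an n×n complex matrix, B an n×m complex matrix, and let Φx(l) be n×n complex matrices and Φu(l) be m×n complex matrices for 1 ≤ l ≤ K. Define Φx(s) = Σ_{l=1}^K Φx(l)/(s−p_l) and Φu(s) = Σ_{l=1}^K Φu(l)/(s−p_l). Then (sI−A)·Φx(s) − B·Φu(s) = I holds for every s ∈ ℂ with s ∉ {p_1,…,p_K} if and only if Σ_{l=1}^K Φx(l) = I and B·Φu(l) = (p_l·I−A)·Φx(l) for every l ∈ {1,…,K}. -/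
open scoped BigOperators

/-!
Off the poles, `s / (s - pₗ) = 1 + pₗ / (s - pₗ)`, so the left-hand side of the feasibility
constraint is the partial fraction expansion with constant term `∑ₗ Φxₗ` and residue
`(pₗ I - A) Φxₗ - B Φuₗ` at `pₗ`. The constant term and the residues of such an expansion are
determined by its values on any infinite set of non-poles: linear functionals reduce this to scalar
coefficients, where clearing denominators gives the uniqueness of partial fractions for polynomials.
-/

section PartialFractions

variable {𝕜 ι : Type*} [Field 𝕜] [Fintype ι] {p : ι → 𝕜} {S : Set 𝕜}

open Polynomial in
theorem eval_C_mul_prod_add_sum_C_mul_prod_erase [DecidableEq ι] {s : 𝕜} (hs : s ∉ Set.range p)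
    (c : 𝕜) (r : ι → 𝕜) :
    (C c * ∏ j, (X - C (p j)) + ∑ l, C (r l) * ∏ j ∈ Finset.univ.erase l, (X - C (p j))).eval s =
      (c + ∑ l, (s - p l)⁻¹ * r l) * ∏ j, (s - p j) := by
  simp only [eval_add, eval_mul, eval_C, eval_prod, eval_sub, eval_X, eval_finsetSum, add_mul,
    Finset.sum_mul]
  congr 1
  refine Finset.sum_congr rfl fun l _ ↦ ?_
  have hsl : s - p l ≠ 0 := sub_ne_zero.mpr fun h ↦ hs ⟨l, h.symm⟩
  rw [← Finset.mul_prod_erase Finset.univ (fun j ↦ s - p j) (Finset.mem_univ l)]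
  field_simp

open Polynomial in
theorem eq_zero_of_add_sum_inv_sub_mul_eq_zero (hp : Function.Injective p) (hS : S.Infinite)
    (hSp : Disjoint S (Set.range p)) {c : 𝕜} {r : ι → 𝕜}
    (h : ∀ s ∈ S, c + ∑ l, (s - p l)⁻¹ * r l = 0) : c = 0 ∧ ∀ l, r l = 0 := by
  classical
  have numerator_eq_zero : C c * ∏ j, (X - C (p j)) +
      ∑ l, C (r l) * ∏ j ∈ Finset.univ.erase l, (X - C (p j)) = 0 := by
    refine eq_zero_of_infinite_isRoot _ (hS.mono fun s hs ↦ ?_)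
    rw [Set.mem_ofPred_eq, IsRoot.def,
      eval_C_mul_prod_add_sum_C_mul_prod_erase (hSp.notMem_of_mem_left hs), h s hs, zero_mul]
  have degree_C_lt (a : 𝕜) (l : ι) : (C a).degree < (X - C (p l)).degree := by
    rw [degree_X_sub_C]
    exact degree_C_le.trans_lt zero_lt_one
  obtain ⟨hc, hr⟩ := quo_mul_prod_add_sum_rem_mul_prod_unique (s := Finset.univ)
    (q₁ := C c) (q₂ := 0) (r₁ := fun l ↦ C (r l)) (r₂ := fun _ ↦ C 0)
    (fun l _ ↦ monic_X_sub_C (p l)) ((pairwise_coprime_X_sub_C hp).set_pairwise _)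
    (fun l _ ↦ degree_C_lt _ l) (fun l _ ↦ degree_C_lt _ l) (by simpa using numerator_eq_zero)
  exact ⟨C_eq_zero.mp hc, fun l ↦ C_injective (hr l (Finset.mem_univ l))⟩

variable {E : Type*} [AddCommGroup E] [Module 𝕜 E]

theorem add_sum_inv_sub_smul_eq_iff (hp : Function.Injective p) (hS : S.Infinite)
    (hSp : Disjoint S (Set.range p)) {c d : E} {r : ι → E} :
    (∀ s ∈ S, c + ∑ l, (s - p l)⁻¹ • r l = d) ↔ c = d ∧ ∀ l, r l = 0 := by
  refine ⟨fun h ↦ ?_, fun ⟨hc, hr⟩ s _ ↦ by simp [hc, hr]⟩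
  have dual_eq_zero (f : Module.Dual 𝕜 E) : f (c - d) = 0 ∧ ∀ l, f (r l) = 0 := by
    refine eq_zero_of_add_sum_inv_sub_mul_eq_zero hp hS hSp fun s hs ↦ ?_
    have f_expansion := congrArg f (h s hs)
    simp only [map_add, map_sum, map_smul, smul_eq_mul] at f_expansion
    rw [map_sub, ← f_expansion]
    ring
  constructor
  · exact sub_eq_zero.mp <| (Module.forall_dual_apply_eq_zero_iff 𝕜 _).mp fun f ↦
      (dual_eq_zero f).1
  · exact fun l ↦ (Module.forall_dual_apply_eq_zero_iff 𝕜 _).mp fun f ↦ (dual_eq_zero f).2 l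

theorem smul_sum_inv_sub_smul {s : 𝕜} (hs : s ∉ Set.range p) (x : ι → E) :
    s • ∑ l, (s - p l)⁻¹ • x l = ∑ l, x l + ∑ l, (s - p l)⁻¹ • p l • x l := by
  rw [Finset.smul_sum, ← Finset.sum_add_distrib]
  refine Finset.sum_congr rfl fun l _ ↦ ?_
  have hsl : s - p l ≠ 0 := sub_ne_zero.mpr fun h ↦ hs ⟨l, h.symm⟩
  match_scalars
  field_simp
  ring

end PartialFractions

section Feasibility

variable {𝕜 ι m n q : Type*} [Field 𝕜] [Fintype ι] [Fintype m] [Fintype n] [DecidableEq n]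
  {p : ι → 𝕜} (A : Matrix n n 𝕜) (B : Matrix n m 𝕜)
  (Φx : ι → Matrix n q 𝕜) (Φu : ι → Matrix m q 𝕜)

theorem smul_one_sub_mul_sum_sub_mul_sum {s : 𝕜} (hs : s ∉ Set.range p) :
    (s • (1 : Matrix n n 𝕜) - A) * (∑ l, (s - p l)⁻¹ • Φx l) - B * (∑ l, (s - p l)⁻¹ • Φu l) =
      ∑ l, Φx l +
        ∑ l, (s - p l)⁻¹ • ((p l • (1 : Matrix n n 𝕜) - A) * Φx l - B * Φu l) := by
  rw [Matrix.sub_mul, Matrix.smul_mul, Matrix.one_mul, smul_sum_inv_sub_smul hs]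
  simp only [Matrix.sub_mul, Matrix.smul_mul, Matrix.one_mul, Matrix.mul_sum, Matrix.mul_smul,
    smul_sub, Finset.sum_sub_distrib]
  abel

theorem sls_coefficient_constraints_simple_general (hp : Function.Injective p) {S : Set 𝕜}
    (hS : S.Infinite) (hSp : Disjoint S (Set.range p)) (D : Matrix n q 𝕜) :
    (∀ s ∈ S, (s • (1 : Matrix n n 𝕜) - A) * (∑ l, (s - p l)⁻¹ • Φx l) -
        B * (∑ l, (s - p l)⁻¹ • Φu l) = D) ↔
      ((∑ l, Φx l) = D ∧ ∀ l, B * Φu l = (p l • (1 : Matrix n n 𝕜) - A) * Φx l) := by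
  have expansion (s : 𝕜) (hs : s ∈ S) :=
    smul_one_sub_mul_sum_sub_mul_sum A B Φx Φu (hSp.notMem_of_mem_left hs)
  rw [forall₂_congr fun s hs ↦ by rw [expansion s hs], add_sum_inv_sub_smul_eq_iff hp hS hSp]
  exact and_congr_right' (forall_congr' fun l ↦ sub_eq_zero.trans eq_comm)

end Feasibility

/-- SLS feasibility constraint in partial-fraction coefficient form (simple poles). -/
theorem sls_coefficient_constraints_simple {n m K : ℕ}
    (p : Fin K → ℂ) (hp : Function.Injective p)
    (A : Matrix (Fin n) (Fin n) ℂ) (B : Matrix (Fin n) (Fin m) ℂ)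
    (Φx : Fin K → Matrix (Fin n) (Fin n) ℂ)
    (Φu : Fin K → Matrix (Fin m) (Fin n) ℂ) :
    (∀ s : ℂ, s ∉ Set.range p →
        (s • (1 : Matrix (Fin n) (Fin n) ℂ) - A) * (∑ l, (s - p l)⁻¹ • Φx l) -
          B * (∑ l, (s - p l)⁻¹ • Φu l) = 1) ↔
      ((∑ l, Φx l) = 1 ∧
        ∀ l, B * Φu l = (p l • (1 : Matrix (Fin n) (Fin n) ℂ) - A) * Φx l) :=
  sls_coefficient_constraints_simple_general A B Φx Φu hp (Set.finite_range p).infinite_compl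
    disjoint_compl_left 1
end

section
/- Let s ∈ ℂ, let A be an n×n complex matrix, B an n×m complex matrix, X an invertible n×n complex matrix and U an m×n complex matrix such that (sI − A)·X − B·U = I. Then the matrix sI − A − B·U·X⁻¹ is invertible with inverse X; consequently, for every w ∈ ℂⁿ, the vectors x := X·w and u := U·w satisfy s·x = A·x + B·u + w and u = (U·X⁻¹)·x. That is, the controller K := U·X⁻¹ achieves the closed-loop responses x = X·w and u = U·w. -/
open scoped Matrix

section SLS

variable {ι κ R : Type*} [Fintype ι] [DecidableEq ι] [Fintype κ]

/-- The SLS feasibility constraint `(sI - A)X - BU = I` on the values `(X, U)`, at the frequency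
`s`, of the responses from disturbance to state and from disturbance to input. -/
def IsSLSFeasible [Ring R] (s : R) (A : Matrix ι ι R) (B : Matrix ι κ R)
    (X : Matrix ι ι R) (U : Matrix κ ι R) : Prop :=
  (s • (1 : Matrix ι ι R) - A) * X - B * U = 1

namespace IsSLSFeasible

variable [Ring R] {s : R} {A X : Matrix ι ι R} {B : Matrix ι κ R} {U : Matrix κ ι R}

theorem smul_eq (h : IsSLSFeasible s A B X U) : s • X = A * X + B * U + 1 := by
  have h' : s • X - A * X - B * U = 1 := by
    simpa only [IsSLSFeasible, Matrix.sub_mul, Matrix.smul_mul, Matrix.one_mul] using h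
  rw [← h']
  abel

theorem smul_mulVec (h : IsSLSFeasible s A B X U) (w : ι → R) :
    s • X *ᵥ w = A *ᵥ (X *ᵥ w) + B *ᵥ (U *ᵥ w) + w := by
  rw [← Matrix.smul_mulVec, h.smul_eq]
  simp only [Matrix.add_mulVec, Matrix.mulVec_mulVec, Matrix.one_mulVec]

theorem closedLoop_mul_eq_one (h : IsSLSFeasible s A B X U) {K : Matrix κ ι R} (hK : K * X = U) :
    (s • (1 : Matrix ι ι R) - A - B * K) * X = 1 := by
  rw [Matrix.sub_mul, Matrix.mul_assoc, hK]
  exact h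

end IsSLSFeasible

theorem controller_achieves_response_general [CommRing R] {s : R} {A X : Matrix ι ι R}
    {B : Matrix ι κ R} {U : Matrix κ ι R} (hX : IsUnit X.det) (h : IsSLSFeasible s A B X U) :
    IsUnit (s • (1 : Matrix ι ι R) - A - B * (U * X⁻¹)).det ∧
      (s • (1 : Matrix ι ι R) - A - B * (U * X⁻¹))⁻¹ = X ∧
      ∀ w : ι → R,
        s • X *ᵥ w = A *ᵥ (X *ᵥ w) + B *ᵥ (U *ᵥ w) + w ∧
        U *ᵥ w = (U * X⁻¹) *ᵥ (X *ᵥ w) := by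
  have hK : U * X⁻¹ * X = U := Matrix.nonsing_inv_mul_cancel_right X U hX
  have hinv := h.closedLoop_mul_eq_one hK
  refine ⟨Matrix.isUnit_det_of_right_inverse hinv, Matrix.inv_eq_right_inv hinv,
    fun w => ⟨h.smul_mulVec w, ?_⟩⟩
  rw [Matrix.mulVec_mulVec, hK]

end SLS

/-- If `(X, U)` satisfies the SLS constraint `(sI−A)X − BU = I` with `X`
invertible, then `K = U·X⁻¹` makes `sI − A − BK` invertible with inverse `X`,
and achieves the closed-loop responses `x = Xw`, `u = Uw`. -/
theorem controller_achieves_response {n m : ℕ} (s : ℂ)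
    (A : Matrix (Fin n) (Fin n) ℂ) (B : Matrix (Fin n) (Fin m) ℂ)
    (X : Matrix (Fin n) (Fin n) ℂ) (U : Matrix (Fin m) (Fin n) ℂ)
    (hX : IsUnit X.det)
    (h : (s • (1 : Matrix (Fin n) (Fin n) ℂ) - A) * X - B * U = 1) :
    IsUnit (s • (1 : Matrix (Fin n) (Fin n) ℂ) - A - B * (U * X⁻¹)).det ∧
      (s • (1 : Matrix (Fin n) (Fin n) ℂ) - A - B * (U * X⁻¹))⁻¹ = X ∧
      ∀ w : Fin n → ℂ,
        s • X.mulVec w = A.mulVec (X.mulVec w) + B.mulVec (U.mulVec w) + w ∧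
        U.mulVec w = (U * X⁻¹).mulVec (X.mulVec w) :=
  controller_achieves_response_general hX h
end
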